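/- arXiv:2506.17124 — 2 statements merged into one kernel-verified Lean document; each statement's English description precedes it below -/
import Mathlib

section
/- Let (S, A, p, r, γ, T, C, p_T) be a deterministic thought MDP with bounded nonnegative rewards and discount factor γ ∈ (0,1), and assume reachable positive reward: there exist s* ∈ S and a* ∈ A with r(s*, a*) > 0 such that for every s̃ ∈ S and every τ ∈ T there is a deterministic policy whose trajectory from (s̃, τ) reaches environment state s* at some finite time step. Then every optimal deterministic policy π* (one satisfying v_{π*}(s,τ) ≥ v_π(s,τ) for every deterministic policy π and all (s,τ)) never takes thought actions: π*(s,τ) ∈ A for all s ∈ S and τ ∈ T. -/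
/-!
Let `V` be the value of the optimal policy. Policy improvement shows that `V` satisfies the Bellman
inequality `V x ≥ r_π(x) + γ V(step_π x)` for every policy `π`
(`bellman_le_of_optimal`). Three consequences finish the argument.

* Following a policy that reaches the rewarding state `s*` and then playing `a*` gives `V > 0`
  everywhere.
* `V (s, τ)` does not depend on `τ`: an environment action prescribed at `(s, τ')` is also available
  at `(s, τ)`, and a thought action only discounts, so every difference
  `V (s, τ') - V (s, τ)` is at most `γ` times another such difference. A function which is bounded
  above and dominated in this way is nonpositive (`nonpos_of_le_mul`).
* A thought action at `(s, τ)` would give `V (s, τ) = γ V (s, τ') = γ V (s, τ)`, hence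
  `V (s, τ) = 0`, a contradiction.
-/

/-- One step of the trajectory generated by a deterministic policy in a deterministic
thought MDP: an environment action moves the environment state, a thought action moves
the thought state. -/
def detStep {S T A C : Type} (p : S → A → S) (pT : S → T → C → T)
    (π : S → T → A ⊕ C) (st : S × T) : S × T :=
  match π st.1 st.2 with
  | Sum.inl a => (p st.1 a, st.2)
  | Sum.inr c => (st.1, pT st.1 st.2 c)

/-- The reward received at a state-thought pair: `r(s,a)` for an environment action,
`0` for a thought action. -/
def detReward {S T A C : Type} (r : S → A → ℝ) (π : S → T → A ⊕ C) (st : S × T) : ℝ :=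
  match π st.1 st.2 with
  | Sum.inl a => r st.1 a
  | Sum.inr _ => 0

/-- The value of a deterministic policy: `v_π(s,τ) = Σ_{t=0}^∞ γ^t r_t` along the
trajectory generated from `(s,τ)`. -/
noncomputable def detValue {S T A C : Type} (γ : ℝ) (p : S → A → S) (r : S → A → ℝ)
    (pT : S → T → C → T) (π : S → T → A ⊕ C) (st : S × T) : ℝ :=
  ∑' t : ℕ, γ ^ t * detReward r π ((detStep p pT π)^[t] st)

/-- A discounted maximum principle: it plays the role of the contraction argument for Bellman
operators without requiring suprema to be attained. -/
lemma nonpos_of_le_mul {X : Type*} {γ : ℝ} (hγ0 : 0 < γ) (hγ1 : γ < 1) (f : X → ℝ) (B : ℝ)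
    (hB : ∀ x, f x ≤ B) (h : ∀ x, ∃ y, f x ≤ γ * f y) (x : X) : f x ≤ 0 := by
  have key : ∀ n : ℕ, ∀ x, f x ≤ γ ^ n * B := by
    intro n
    induction n with
    | zero => intro x; simpa using hB x
    | succ n ih =>
      intro x
      obtain ⟨y, hy⟩ := h x
      calc f x ≤ γ * f y := hy
        _ ≤ γ * (γ ^ n * B) := mul_le_mul_of_nonneg_left (ih y) hγ0.le
        _ = γ ^ (n + 1) * B := by ring
  have hlim : Filter.Tendsto (fun n : ℕ => γ ^ n * B) Filter.atTop (nhds (0 * B)) :=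
    (tendsto_pow_atTop_nhds_zero_of_lt_one hγ0.le hγ1).mul_const B
  rw [zero_mul] at hlim
  exact ge_of_tendsto' hlim (fun n => key n x)

section ThoughtMDP

variable {S T A C : Type} {γ : ℝ} {p : S → A → S} {r : S → A → ℝ} {pT : S → T → C → T} {B : ℝ}

lemma detReward_nonneg (hr : ∀ s a, 0 ≤ r s a) (π : S → T → A ⊕ C) (x : S × T) :
    0 ≤ detReward r π x := by
  unfold detReward
  split
  · exact hr _ _
  · exact le_rfl

lemma detReward_le (hB0 : 0 ≤ B) (hB : ∀ s a, r s a ≤ B) (π : S → T → A ⊕ C) (x : S × T) :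
    detReward r π x ≤ B := by
  unfold detReward
  split
  · exact hB _ _
  · exact hB0

lemma detValue_nonneg (hγ0 : 0 < γ) (hr : ∀ s a, 0 ≤ r s a) (π : S → T → A ⊕ C) (x : S × T) :
    0 ≤ detValue γ p r pT π x :=
  tsum_nonneg fun t => mul_nonneg (pow_nonneg hγ0.le t) (detReward_nonneg hr π _)

lemma summable_detValue (hγ0 : 0 < γ) (hγ1 : γ < 1) (hr : ∀ s a, 0 ≤ r s a) (hB0 : 0 ≤ B)
    (hB : ∀ s a, r s a ≤ B) (π : S → T → A ⊕ C) (x : S × T) :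
    Summable fun t : ℕ => γ ^ t * detReward r π ((detStep p pT π)^[t] x) :=
  Summable.of_nonneg_of_le
    (fun t => mul_nonneg (pow_nonneg hγ0.le t) (detReward_nonneg hr π _))
    (fun t => mul_le_mul_of_nonneg_left (detReward_le hB0 hB π _) (pow_nonneg hγ0.le t))
    ((summable_geometric_of_lt_one hγ0.le hγ1).mul_right B)

lemma detValue_le (hγ0 : 0 < γ) (hγ1 : γ < 1) (hr : ∀ s a, 0 ≤ r s a) (hB0 : 0 ≤ B)
    (hB : ∀ s a, r s a ≤ B) (π : S → T → A ⊕ C) (x : S × T) :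
    detValue γ p r pT π x ≤ (1 - γ)⁻¹ * B := by
  rw [← tsum_geometric_of_lt_one hγ0.le hγ1, ← tsum_mul_right]
  exact (summable_detValue hγ0 hγ1 hr hB0 hB π x).tsum_le_tsum
    (fun t => mul_le_mul_of_nonneg_left (detReward_le hB0 hB π _) (pow_nonneg hγ0.le t))
    ((summable_geometric_of_lt_one hγ0.le hγ1).mul_right B)

/-- The Bellman equation for the value of a policy. -/
lemma detValue_eq (hγ0 : 0 < γ) (hγ1 : γ < 1) (hr : ∀ s a, 0 ≤ r s a) (hB0 : 0 ≤ B)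
    (hB : ∀ s a, r s a ≤ B) (π : S → T → A ⊕ C) (x : S × T) :
    detValue γ p r pT π x
      = detReward r π x + γ * detValue γ p r pT π (detStep p pT π x) := by
  unfold detValue
  rw [(summable_detValue hγ0 hγ1 hr hB0 hB π x).tsum_eq_zero_add, ← tsum_mul_left]
  simp only [pow_zero, one_mul, Function.iterate_zero, id_eq, Function.iterate_succ,
    Function.comp_apply, pow_succ']
  simp only [mul_assoc]

/-- The value of an optimal policy satisfies the Bellman inequality for the action prescribed by
any other policy: otherwise, switching to that action wherever it is strictly better would improve
the value. -/
lemma bellman_le_of_optimal (hγ0 : 0 < γ) (hγ1 : γ < 1) (hr : ∀ s a, 0 ≤ r s a) (hB0 : 0 ≤ B)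
    (hB : ∀ s a, r s a ≤ B) (πstar : S → T → A ⊕ C)
    (hopt : ∀ (π : S → T → A ⊕ C) (s : S) (τ : T),
      detValue γ p r pT π (s, τ) ≤ detValue γ p r pT πstar (s, τ))
    (π : S → T → A ⊕ C) (x : S × T) :
    detReward r π x + γ * detValue γ p r pT πstar (detStep p pT π x)
      ≤ detValue γ p r pT πstar x := by
  classical
  set V := detValue γ p r pT πstar with hV
  by_contra! hlt
  let better : S × T → Prop := fun y => V y < detReward r π y + γ * V (detStep p pT π y)
  let π₁ : S → T → A ⊕ C := fun s τ => if better (s, τ) then π s τ else πstar s τ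
  have hin : ∀ y, better y →
      detReward r π₁ y = detReward r π y ∧ detStep p pT π₁ y = detStep p pT π y := by
    intro y hy
    have e : π₁ y.1 y.2 = π y.1 y.2 := if_pos hy
    simp only [detReward, detStep, e, and_self]
  have hout : ∀ y, ¬ better y →
      detReward r π₁ y = detReward r πstar y ∧ detStep p pT π₁ y = detStep p pT πstar y := by
    intro y hy
    have e : π₁ y.1 y.2 = πstar y.1 y.2 := if_neg hy
    simp only [detReward, detStep, e, and_self]
  have hge : ∀ y, V y - detValue γ p r pT π₁ y ≤ 0 := by
    refine nonpos_of_le_mul hγ0 hγ1 _ ((1 - γ)⁻¹ * B) (fun y => ?_) (fun y => ?_)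
    · have h1 : V y ≤ (1 - γ)⁻¹ * B := detValue_le hγ0 hγ1 hr hB0 hB πstar y
      have h2 := detValue_nonneg (p := p) (pT := pT) hγ0 hr π₁ y
      linarith
    · refine ⟨detStep p pT π₁ y, ?_⟩
      have h1 := detValue_eq (p := p) (pT := pT) hγ0 hγ1 hr hB0 hB π₁ y
      by_cases hy : better y
      · obtain ⟨e1, e2⟩ := hin y hy
        have hy' : V y < detReward r π y + γ * V (detStep p pT π y) := hy
        rw [← e1, ← e2] at hy'
        linarith
      · obtain ⟨e1, e2⟩ := hout y hy
        have h2 : V y = detReward r πstar y + γ * V (detStep p pT πstar y) :=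
          detValue_eq hγ0 hγ1 hr hB0 hB πstar y
        rw [← e1, ← e2] at h2
        linarith
  obtain ⟨e1, e2⟩ := hin x hlt
  have h1 := detValue_eq (p := p) (pT := pT) hγ0 hγ1 hr hB0 hB π₁ x
  have h2 : detValue γ p r pT π₁ x ≤ V x := hopt π₁ x.1 x.2
  have h3 := mul_le_mul_of_nonneg_left (sub_nonpos.1 (hge (detStep p pT π₁ x))) hγ0.le
  rw [← e1, ← e2] at hlt
  linarith

end ThoughtMDP

/-- In a deterministic thought MDP with bounded nonnegative rewards
and reachable positive reward, any optimal deterministic policy never takes thought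
actions. -/
theorem optimal_policy_never_thinks {S T A C : Type}
    (γ : ℝ) (hγ0 : 0 < γ) (hγ1 : γ < 1)
    (p : S → A → S) (r : S → A → ℝ)
    (hr_nonneg : ∀ s a, 0 ≤ r s a) (hr_bdd : ∃ B : ℝ, ∀ s a, r s a ≤ B)
    (pT : S → T → C → T)
    (hreach : ∃ (sstar : S) (astar : A), 0 < r sstar astar ∧
      ∀ (stilde : S) (τ : T), ∃ (π' : S → T → A ⊕ C) (t : ℕ),
        ((detStep p pT π')^[t] (stilde, τ)).1 = sstar)
    (πstar : S → T → A ⊕ C)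
    (hopt : ∀ (π : S → T → A ⊕ C) (s : S) (τ : T),
      detValue γ p r pT π (s, τ) ≤ detValue γ p r pT πstar (s, τ)) :
    ∀ (s : S) (τ : T), ∃ a : A, πstar s τ = Sum.inl a := by
  obtain ⟨B₀, hB₀⟩ := hr_bdd
  obtain ⟨sstar, astar, hpos, hreach⟩ := hreach
  have hB0 : 0 ≤ B₀ := (hr_nonneg sstar astar).trans (hB₀ sstar astar)
  have hbell := bellman_le_of_optimal (p := p) (pT := pT) hγ0 hγ1 hr_nonneg hB0 hB₀ πstar hopt
  have hnn := detValue_nonneg (p := p) (pT := pT) hγ0 hr_nonneg πstar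
  have hle := detValue_le (p := p) (pT := pT) hγ0 hγ1 hr_nonneg hB0 hB₀ πstar
  have heq := detValue_eq (p := p) (pT := pT) hγ0 hγ1 hr_nonneg hB0 hB₀ πstar
  set V := detValue γ p r pT πstar with hV
  have hact : ∀ s τ a, r s a + γ * V (p s a, τ) ≤ V (s, τ) :=
    fun s τ a => hbell (fun _ _ => Sum.inl a) (s, τ)
  have hiter : ∀ (π : S → T → A ⊕ C) (t : ℕ) (x : S × T),
      γ ^ t * V ((detStep p pT π)^[t] x) ≤ V x := by
    intro π t
    induction t with
    | zero => intro x; simp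
    | succ t ih =>
      intro x
      rw [Function.iterate_succ_apply, pow_succ', mul_assoc]
      have h1 := mul_le_mul_of_nonneg_left (ih (detStep p pT π x)) hγ0.le
      have h2 := hbell π x
      have h3 := detReward_nonneg hr_nonneg π x
      linarith
  have hVpos : ∀ s τ, 0 < V (s, τ) := by
    intro s τ
    obtain ⟨π, t, ht⟩ := hreach s τ
    refine lt_of_lt_of_le (mul_pos (pow_pos hγ0 t) ?_) (hiter π t (s, τ))
    generalize (detStep p pT π)^[t] (s, τ) = y at ht
    obtain ⟨s', τ'⟩ := y
    subst ht
    have h1 := hact s' τ' astar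
    have h2 := mul_nonneg hγ0.le (hnn (p s' astar, τ'))
    linarith
  have hindep : ∀ s τ τ', V (s, τ') ≤ V (s, τ) := by
    have h := nonpos_of_le_mul hγ0 hγ1
      (fun z : S × T × T => V (z.1, z.2.2) - V (z.1, z.2.1)) ((1 - γ)⁻¹ * B₀)
      (fun z => by linarith [hle (z.1, z.2.2), hnn (z.1, z.2.1)])
      (by
        rintro ⟨s, τ, τ'⟩
        have h1 := heq (s, τ')
        rcases hu : πstar s τ' with a | c
        · refine ⟨(p s a, τ, τ'), ?_⟩
          simp only [detReward, detStep, hu] at h1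
          have h2 := hact s τ a
          simp only
          linarith
        · refine ⟨(s, τ, pT s τ' c), ?_⟩
          simp only [detReward, detStep, hu] at h1
          -- Discounting only decreases the nonnegative value at the unchanged pair `(s, τ)`.
          have h2 : γ * V (s, τ) ≤ V (s, τ) := mul_le_of_le_one_left (hnn _) hγ1.le
          simp only
          linarith)
    intro s τ τ'
    exact sub_nonpos.1 (h (s, τ, τ'))
  intro s τ
  rcases hu : πstar s τ with a | c
  · exact ⟨a, rfl⟩
  · exfalso
    have h1 := heq (s, τ)
    simp only [detReward, detStep, hu] at h1
    have h2 := mul_le_mul_of_nonneg_left (hindep s τ (pT s τ c)) hγ0.le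
    have h3 := mul_lt_of_lt_one_left (hVpos s τ) hγ1
    linarith
end

section
/- Let (S, A, p, r, γ, T, C, p_T) be a deterministic thought MDP with bounded strictly negative rewards (r(s,a) < 0 for all s ∈ S, a ∈ A), discount factor γ ∈ (0,1), and nonempty thought action set C. Then: (i) any deterministic policy π_think that takes only thought actions (π_think(s,τ) ∈ C for all (s,τ)) has value v_{π_think}(s,τ) = 0 for all (s,τ); and (ii) any deterministic policy π whose trajectory from (s,τ) takes an environment action at some finite time step has v_π(s,τ) < 0. Consequently v_{π_think}(s,τ) > v_π(s,τ) for every such π: with all-negative rewards, perpetually taking thought actions strictly dominates ever taking an environment action. -/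
lemma detReward_nonpos {S T A C : Type} {r : S → A → ℝ} (hr_neg : ∀ s a, r s a < 0)
    (π : S → T → A ⊕ C) (st : S × T) : detReward r π st ≤ 0 := by
  unfold detReward
  split
  · exact (hr_neg _ _).le
  · exact le_rfl

lemma summable_discounted_detReward {S T A C : Type} {γ : ℝ} (hγ0 : 0 < γ) (hγ1 : γ < 1)
    {r : S → A → ℝ} (hr_bdd : ∃ B : ℝ, ∀ s a, |r s a| ≤ B)
    (π : S → T → A ⊕ C) (x : ℕ → S × T) :
    Summable fun t : ℕ => γ ^ t * detReward r π (x t) := by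
  obtain ⟨B, hB⟩ := hr_bdd
  -- `|B|` rather than `B`: if `A` or `S` is empty, `B` may be negative.
  have hbound : ∀ st, |detReward r π st| ≤ |B| := by
    intro st
    unfold detReward
    split
    · exact (hB _ _).trans (le_abs_self B)
    · simp
  refine Summable.of_norm_bounded
    ((summable_geometric_of_lt_one hγ0.le hγ1).mul_right |B|) fun t => ?_
  rw [Real.norm_eq_abs, abs_mul, abs_of_pos (pow_pos hγ0 t)]
  exact mul_le_mul_of_nonneg_left (hbound _) (pow_pos hγ0 t).le

lemma detValue_eq_zero {S T A C : Type} (γ : ℝ) (p : S → A → S) (r : S → A → ℝ)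
    (pT : S → T → C → T) (π : S → T → A ⊕ C) (hπ : ∀ s τ, ∃ c : C, π s τ = Sum.inr c)
    (st : S × T) : detValue γ p r pT π st = 0 := by
  have hzero : ∀ st, detReward r π st = 0 := by
    intro st
    obtain ⟨c, hc⟩ := hπ st.1 st.2
    simp [detReward, hc]
  simp [detValue, hzero]

lemma detValue_neg {S T A C : Type} {γ : ℝ} (hγ0 : 0 < γ) (hγ1 : γ < 1)
    (p : S → A → S) {r : S → A → ℝ}
    (hr_neg : ∀ s a, r s a < 0) (hr_bdd : ∃ B : ℝ, ∀ s a, |r s a| ≤ B)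
    (pT : S → T → C → T) (π : S → T → A ⊕ C) (st : S × T)
    (h : ∃ (t : ℕ) (a : A),
      π ((detStep p pT π)^[t] st).1 ((detStep p pT π)^[t] st).2 = Sum.inl a) :
    detValue γ p r pT π st < 0 := by
  obtain ⟨t, a, ha⟩ := h
  have hterm : γ ^ t * detReward r π ((detStep p pT π)^[t] st) < 0 := by
    refine mul_neg_of_pos_of_neg (pow_pos hγ0 t) ?_
    simp only [detReward, ha]
    exact hr_neg _ _
  have hlt := Summable.tsum_lt_tsum
    (f := fun n : ℕ => γ ^ n * detReward r π ((detStep p pT π)^[n] st)) (g := fun _ : ℕ => (0 : ℝ))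
    (fun n => mul_nonpos_of_nonneg_of_nonpos (pow_pos hγ0 n).le (detReward_nonpos hr_neg π _))
    hterm
    (summable_discounted_detReward hγ0 hγ1 hr_bdd π fun n => (detStep p pT π)^[n] st)
    summable_zero
  simpa [detValue] using hlt

/-- In a deterministic thought MDP with bounded strictly negative
rewards: (i) a policy that only takes thought actions has value 0 everywhere;
(ii) a policy whose trajectory from `(s,τ)` ever takes an environment action has
strictly negative value there; consequently perpetual thinking strictly dominates. -/
theorem negative_rewards_thinking_dominates {S T A C : Type} [Nonempty C]
    (γ : ℝ) (hγ0 : 0 < γ) (hγ1 : γ < 1)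
    (p : S → A → S) (r : S → A → ℝ)
    (hr_neg : ∀ s a, r s a < 0) (hr_bdd : ∃ B : ℝ, ∀ s a, |r s a| ≤ B)
    (pT : S → T → C → T) :
    (∀ πthink : S → T → A ⊕ C, (∀ s τ, ∃ c : C, πthink s τ = Sum.inr c) →
      ∀ (s : S) (τ : T), detValue γ p r pT πthink (s, τ) = 0) ∧
    (∀ (π : S → T → A ⊕ C) (s : S) (τ : T),
      (∃ (t : ℕ) (a : A),
        π ((detStep p pT π)^[t] (s, τ)).1 ((detStep p pT π)^[t] (s, τ)).2 = Sum.inl a) →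
      detValue γ p r pT π (s, τ) < 0) ∧
    (∀ (πthink π : S → T → A ⊕ C), (∀ s τ, ∃ c : C, πthink s τ = Sum.inr c) →
      ∀ (s : S) (τ : T),
      (∃ (t : ℕ) (a : A),
        π ((detStep p pT π)^[t] (s, τ)).1 ((detStep p pT π)^[t] (s, τ)).2 = Sum.inl a) →
      detValue γ p r pT π (s, τ) < detValue γ p r pT πthink (s, τ)) := by
  refine ⟨fun πthink hthink s τ => detValue_eq_zero γ p r pT πthink hthink (s, τ),
    fun π s τ h => detValue_neg hγ0 hγ1 p hr_neg hr_bdd pT π (s, τ) h,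
    fun πthink π hthink s τ h => ?_⟩
  rw [detValue_eq_zero γ p r pT πthink hthink (s, τ)]
  exact detValue_neg hγ0 hγ1 p hr_neg hr_bdd pT π (s, τ) h
end
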